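/- Let R = ℂ[∂]V be a Lie conformal algebra with trivial left-center and Q = ℂ[∂]x a Leibniz conformal algebra free of rank 1 over ℂ[∂]. Then: (1) if Q is abelian, LHC²_R(Q,R) ≅ FC(R)/≡, where (D, T, Q₀, 0) ≡ (D', T', Q₀', 0) if and only if there exists β ∈ ℂ∖{0} such that T_λ − βT'_λ is an inner conformal derivation of R; (2) if Q is the Virasoro Lie conformal algebra ([x_λ x] = (∂+2λ)x), then LHC²_R(Q,R) = LHC²(Q,R) ≅ FC(R)/≈, where (D, T, Q₀, ∂+2λ) ≈ (D', T', Q₀', ∂+2λ) if and only if T_λ − T'_λ is an inner conformal derivation of R. -/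

import Mathlib

noncomputable section

/-- `g : ℂ → R` is (the evaluation of) a polynomial in `λ` with coefficients in `R`,
i.e. an element of `R[λ]`. -/
def IsPolyFun {R : Type*} [AddCommGroup R] [Module ℂ R] (g : ℂ → R) : Prop :=
  ∃ (N : ℕ) (c : ℕ → R), ∀ l : ℂ, g l = ∑ i ∈ Finset.range N, l ^ i • c i

/-- A conformal bilinear map `U × V → W[λ]`, in evaluated form: `f_λ(∂u, v) = -λ f_λ(u,v)`
and `f_λ(u, ∂v) = (∂ + λ) f_λ(u,v)`. -/
structure IsConformalBilin {U V W : Type*}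
    [AddCommGroup U] [Module ℂ U] [AddCommGroup V] [Module ℂ V]
    [AddCommGroup W] [Module ℂ W]
    (DU : Module.End ℂ U) (DV : Module.End ℂ V) (DW : Module.End ℂ W)
    (f : ℂ → U → V → W) : Prop where
  add_left : ∀ (l : ℂ) (a a' : U) (b : V), f l (a + a') b = f l a b + f l a' b
  smul_left : ∀ (l c : ℂ) (a : U) (b : V), f l (c • a) b = c • f l a b
  add_right : ∀ (l : ℂ) (a : U) (b b' : V), f l a (b + b') = f l a b + f l a b'
  smul_right : ∀ (l c : ℂ) (a : U) (b : V), f l a (c • b) = c • f l a b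
  poly : ∀ (a : U) (b : V), IsPolyFun (fun l => f l a b)
  conf_left : ∀ (l : ℂ) (a : U) (b : V), f l (DU a) b = (-l) • f l a b
  conf_right : ∀ (l : ℂ) (a : U) (b : V), f l a (DV b) = DW (f l a b) + l • f l a b

/-- A Leibniz conformal algebra structure on the `ℂ[∂]`-module `(R, D)`:
a conformal bilinear `λ`-bracket satisfying the Jacobi identity. -/
structure IsLeibnizConformal {R : Type*} [AddCommGroup R] [Module ℂ R]
    (D : Module.End ℂ R) (br : ℂ → R → R → R) : Prop where
  bilin : IsConformalBilin D D D br
  jacobi : ∀ (l m : ℂ) (a b c : R),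
    br l a (br m b c) = br (l + m) (br l a b) c + br m b (br l a c)

/-- An extending datum `Ω(R,Q) = (↼, ⇀, ◁, ▷, f, {·_λ·})` of a Leibniz conformal algebra
`R` by a `ℂ[∂]`-module `Q`: six conformal bilinear maps.  Here `lh = ↼`, `rh = ⇀`,
`lt = ◁`, `rt = ▷`, `fm = f`, `bq = {·_λ·}`. -/
structure IsExtendingDatum {R Q : Type*}
    [AddCommGroup R] [Module ℂ R] [AddCommGroup Q] [Module ℂ Q]
    (DR : Module.End ℂ R) (DQ : Module.End ℂ Q)
    (lh : ℂ → R → Q → R) (rh : ℂ → R → Q → Q)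
    (lt : ℂ → Q → R → Q) (rt : ℂ → Q → R → R)
    (fm : ℂ → Q → Q → R) (bq : ℂ → Q → Q → Q) : Prop where
  lh_bilin : IsConformalBilin DR DQ DR lh
  rh_bilin : IsConformalBilin DR DQ DQ rh
  lt_bilin : IsConformalBilin DQ DR DQ lt
  rt_bilin : IsConformalBilin DQ DR DR rt
  fm_bilin : IsConformalBilin DQ DQ DR fm
  bq_bilin : IsConformalBilin DQ DQ DQ bq

/-- The unified product bracket on `R × Q`:
`[(a,x)_λ (b,y)] = ([a_λ b] + a↼_λ y + x▷_λ b + f_λ(x,y), a⇀_λ y + x◁_λ b + {x_λ y})`. -/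
def unifiedBracket {R Q : Type*}
    [AddCommGroup R] [Module ℂ R] [AddCommGroup Q] [Module ℂ Q]
    (br : ℂ → R → R → R)
    (lh : ℂ → R → Q → R) (rh : ℂ → R → Q → Q)
    (lt : ℂ → Q → R → Q) (rt : ℂ → Q → R → R)
    (fm : ℂ → Q → Q → R) (bq : ℂ → Q → Q → Q) :
    ℂ → R × Q → R × Q → R × Q :=
  fun l p q =>
    (br l p.1 q.1 + lh l p.1 q.2 + rt l p.2 q.1 + fm l p.2 q.2,
     rh l p.1 q.2 + lt l p.2 q.1 + bq l p.2 q.2)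

/-- The extending datum `(lh, rh, lt, rt, fm, bq)` is obtained from
`(lh', rh', lt', rt', fm', bq')` via the pair `(u, v)` (Definition 3.5 of the paper). -/
def DatumEquivVia {R Q : Type*}
    [AddCommGroup R] [Module ℂ R] [AddCommGroup Q] [Module ℂ Q]
    (DR : Module.End ℂ R) (DQ : Module.End ℂ Q) (br : ℂ → R → R → R)
    (lh : ℂ → R → Q → R) (rh : ℂ → R → Q → Q)
    (lt : ℂ → Q → R → Q) (rt : ℂ → Q → R → R)
    (fm : ℂ → Q → Q → R) (bq : ℂ → Q → Q → Q)
    (lh' : ℂ → R → Q → R) (rh' : ℂ → R → Q → Q)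
    (lt' : ℂ → Q → R → Q) (rt' : ℂ → Q → R → R)
    (fm' : ℂ → Q → Q → R) (bq' : ℂ → Q → Q → Q)
    (u : Q →ₗ[ℂ] R) (v : Q ≃ₗ[ℂ] Q) : Prop :=
  (∀ q : Q, u (DQ q) = DR (u q)) ∧
  (∀ q : Q, v (DQ q) = DQ (v q)) ∧
  (∀ (l : ℂ) (a : R) (x : Q), rh l a x = v.symm (rh' l a (v x))) ∧
  (∀ (l : ℂ) (a : R) (x : Q),
      lh l a x = br l a (u x) + lh' l a (v x) - u (rh l a x)) ∧
  (∀ (l : ℂ) (x : Q) (a : R), lt l x a = v.symm (lt' l (v x) a)) ∧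
  (∀ (l : ℂ) (x : Q) (a : R),
      rt l x a = br l (u x) a + rt' l (v x) a - u (lt l x a)) ∧
  (∀ (l : ℂ) (x y : Q),
      bq l x y = v.symm (rh' l (u x) (v y)) + v.symm (lt' l (v x) (u y))
        + v.symm (bq' l (v x) (v y))) ∧
  (∀ (l : ℂ) (x y : Q),
      fm l x y = br l (u x) (u y) + lh' l (u x) (v y) + rt' l (v x) (u y)
        + fm' l (v x) (v y) - u (bq l x y))

open Polynomial in
/-- The polynomial ring `ℂ[λ, ∂]`, realized as `(ℂ[∂])[λ]`: the *outer* variable is `λ`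
and the *inner* variable is `∂`. -/
abbrev CPoly2 : Type := Polynomial (Polynomial ℂ)

open Polynomial in
/-- Substitute `λ := lam` and `∂ := del` (simultaneously) in `p ∈ ℂ[λ,∂]`; the result is a
polynomial in the remaining formal variable. -/
noncomputable def sub2 (p : CPoly2) (lam del : Polynomial ℂ) : Polynomial ℂ :=
  Polynomial.eval₂ (Polynomial.aeval del).toRingHom lam p

open Polynomial in
/-- Evaluate `p ∈ ℂ[λ,∂]` at `λ := lam`, `∂ := del` with `lam del : ℂ`. -/
noncomputable def ev2 (p : CPoly2) (lam del : ℂ) : ℂ :=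
  (p.eval (Polynomial.C lam)).eval del

open Polynomial in
/-- Substitute `λ := -λ - ∂` in `p ∈ ℂ[λ,∂]` (a formal substitution inside `ℂ[λ,∂]`). -/
noncomputable def twistL (p : CPoly2) : CPoly2 :=
  Polynomial.eval₂ (Polynomial.C : Polynomial ℂ →+* CPoly2)
    (-(Polynomial.X : CPoly2) - Polynomial.C Polynomial.X) p

/-- `IsNegShift D g g'` encodes, for polynomial functions `ℂ → R`, the formal identity
`g'(λ) = g(-λ-∂)`: there are coefficients `c i` of `g` such that
`g' l = ∑ (-l - ∂)^i (c i)`, where `∂` acts via `D`. -/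
def IsNegShift {R : Type*} [AddCommGroup R] [Module ℂ R] (D : Module.End ℂ R)
    (g g' : ℂ → R) : Prop :=
  ∃ (N : ℕ) (c : ℕ → R),
    (∀ l : ℂ, g l = ∑ i ∈ Finset.range N, l ^ i • c i) ∧
    (∀ l : ℂ, g' l = ∑ i ∈ Finset.range N,
      ((((-l) • (1 : Module.End ℂ R) - D)) ^ i) (c i))

open Polynomial

/-- The data of a 4-tuple `(D_λ, T_λ, Q₀(λ,∂), P(λ,∂))` on `R`: `Dm` is a left conformal
linear map, `Tm` is a conformal linear map, `Q₀ ∈ R[λ]` and `P ∈ ℂ[λ,∂]`. -/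
structure FCData (R : Type*) [AddCommGroup R] [Module ℂ R] (DR : Module.End ℂ R) where
  Dm : ℂ → R → R
  Tm : ℂ → R → R
  Q0 : ℂ → R
  P : CPoly2
  Dm_lin : ∀ l : ℂ, IsLinearMap ℂ (Dm l)
  Dm_poly : ∀ a : R, IsPolyFun (fun l => Dm l a)
  Dm_conf : ∀ (l : ℂ) (a : R), Dm l (DR a) = (-l) • Dm l a
  Tm_lin : ∀ l : ℂ, IsLinearMap ℂ (Tm l)
  Tm_poly : ∀ a : R, IsPolyFun (fun l => Tm l a)
  Tm_conf : ∀ (l : ℂ) (a : R), Tm l (DR a) = DR (Tm l a) + l • Tm l a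
  Q0_poly : IsPolyFun Q0

/-- The conditions (fc1)–(fc8) defining the set `FC(R)` of flag datums
`(D_λ, T_λ, Q₀(λ,∂), P(λ,∂))` used for crossed products. -/
def IsFC {R : Type*} [AddCommGroup R] [Module ℂ R] (DR : Module.End ℂ R)
    (br : ℂ → R → R → R) (F : FCData R DR) : Prop :=
  -- (fc1)
  (∀ (l m : ℂ) (a b : R),
    F.Dm (l + m) (br l a b) = br l a (F.Dm m b) - br m b (F.Dm l a)) ∧
  -- (fc2)
  (∀ (l m : ℂ) (a b : R),
    F.Tm m (br l a b) = br l a (F.Tm m b) - br (l + m) (F.Dm l a) b) ∧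
  -- (fc3)
  (∀ (l m : ℂ) (a b : R),
    F.Tm m (br l a b) = br l a (F.Tm m b) + br (l + m) (F.Tm m a) b) ∧
  -- (fc4)
  (∀ (l m : ℂ) (a : R),
    Polynomial.aeval DR (sub2 F.P (Polynomial.C m) (Polynomial.C l + Polynomial.X))
        (F.Dm l a)
      = F.Dm (l + m) (F.Dm l a) + F.Tm m (F.Dm l a) - br l a (F.Q0 m)) ∧
  -- (fc5)
  (∀ (l m : ℂ) (a : R), F.Dm (l + m) (F.Tm m a) + F.Dm (l + m) (F.Dm l a) = 0) ∧
  -- (fc6)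
  (∀ l m : ℂ,
    ev2 F.P l (-l - m) • sub2 F.P (Polynomial.C (l + m)) Polynomial.X
      + sub2 F.P (Polynomial.C l) (Polynomial.C m + Polynomial.X)
          * sub2 F.P (Polynomial.C m) Polynomial.X
      - sub2 F.P (Polynomial.C m) (Polynomial.C l + Polynomial.X)
          * sub2 F.P (Polynomial.C l) Polynomial.X = 0) ∧
  -- (fc7)
  (∀ (l m : ℂ) (a : R),
    ev2 F.P l (-l - m) • F.Tm (l + m) a
      = F.Tm l (F.Tm m a) - br (l + m) (F.Q0 l) a - F.Tm m (F.Tm l a)) ∧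
  -- (fc8)
  (∀ l m : ℂ,
    F.Tm l (F.Q0 m)
      = F.Dm (l + m) (F.Q0 l) + ev2 F.P l (-l - m) • F.Q0 (l + m) + F.Tm m (F.Q0 l)
        + Polynomial.aeval DR
            (sub2 F.P (Polynomial.C l) (Polynomial.C m + Polynomial.X)) (F.Q0 m)
        - Polynomial.aeval DR
            (sub2 F.P (Polynomial.C m) (Polynomial.C l + Polynomial.X)) (F.Q0 l))

/-- Conformal skew-symmetry `[a_λ b] = -[b_{-λ-∂} a]`; a Lie conformal algebra is a
Leibniz conformal algebra whose bracket is skew-symmetric. -/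
def IsSkewSymmBr {R : Type*} [AddCommGroup R] [Module ℂ R] (D : Module.End ℂ R)
    (br : ℂ → R → R → R) : Prop :=
  ∀ a b : R, IsNegShift D (fun l => br l a b) (fun l => -(br l b a))

open Polynomial in
/-- The polynomial `∂ + 2λ ∈ ℂ[λ,∂]` (inner variable `∂`, outer variable `λ`). -/
noncomputable def virasoroP : CPoly2 :=
  Polynomial.C Polynomial.X + (2 : ℂ) • Polynomial.X

/-- A crossed-product extending structure of `(R, DR, br)` by the Leibniz conformal
algebra `(Q, DQ, bq)`: an extending datum with `⇀` and `◁` trivial whose unified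
(= crossed) product is a Leibniz conformal algebra. -/
structure CrossedStruct (R Q : Type*)
    [AddCommGroup R] [Module ℂ R] [AddCommGroup Q] [Module ℂ Q]
    (DR : Module.End ℂ R) (DQ : Module.End ℂ Q)
    (br : ℂ → R → R → R) (bq : ℂ → Q → Q → Q) where
  lh : ℂ → R → Q → R
  rt : ℂ → Q → R → R
  fm : ℂ → Q → Q → R
  datum : IsExtendingDatum DR DQ lh (fun _ _ _ => 0) (fun _ _ _ => 0) rt fm bq
  leib : IsLeibnizConformal (LinearMap.prodMap DR DQ)
    (unifiedBracket br lh (fun _ _ _ => 0) (fun _ _ _ => 0) rt fm bq)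

/-- The relation `≡` on crossed-product extending structures (defining `LHC²_R(Q,R)`). -/
def crossedEquiv {R Q : Type*}
    [AddCommGroup R] [Module ℂ R] [AddCommGroup Q] [Module ℂ Q]
    (DR : Module.End ℂ R) (DQ : Module.End ℂ Q)
    (br : ℂ → R → R → R) (bq : ℂ → Q → Q → Q)
    (Ω Ω' : CrossedStruct R Q DR DQ br bq) : Prop :=
  ∃ (u : Q →ₗ[ℂ] R) (w : Q ≃ₗ[ℂ] Q),
    DatumEquivVia DR DQ br Ω.lh (fun _ _ _ => 0) (fun _ _ _ => 0) Ω.rt Ω.fm bq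
      Ω'.lh (fun _ _ _ => 0) (fun _ _ _ => 0) Ω'.rt Ω'.fm bq u w

/-- The relation `≈` on crossed-product extending structures (defining `LHC²(Q,R)`). -/
def crossedCohom {R Q : Type*}
    [AddCommGroup R] [Module ℂ R] [AddCommGroup Q] [Module ℂ Q]
    (DR : Module.End ℂ R) (DQ : Module.End ℂ Q)
    (br : ℂ → R → R → R) (bq : ℂ → Q → Q → Q)
    (Ω Ω' : CrossedStruct R Q DR DQ br bq) : Prop :=
  ∃ u : Q →ₗ[ℂ] R,
    DatumEquivVia DR DQ br Ω.lh (fun _ _ _ => 0) (fun _ _ _ => 0) Ω.rt Ω.fm bq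
      Ω'.lh (fun _ _ _ => 0) (fun _ _ _ => 0) Ω'.rt Ω'.fm bq u (LinearEquiv.refl ℂ Q)

/-- The relation on flag datums `(D,T,Q₀,0) ∈ FC(R)` in the abelian case:
`∃ β ≠ 0` with `T - βT'` an inner conformal derivation. -/
def fcRelAb {R : Type*} [AddCommGroup R] [Module ℂ R] (DR : Module.End ℂ R)
    (br : ℂ → R → R → R)
    (F F' : {F : FCData R DR // IsFC DR br F ∧ F.P = 0}) : Prop :=
  ∃ β : ℂ, β ≠ 0 ∧ ∃ c : R, ∀ (l : ℂ) (a : R),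
    F.1.Tm l a - β • F'.1.Tm l a = br l c a

/-- The relation on flag datums `(D,T,Q₀,∂+2λ) ∈ FC(R)` in the Virasoro case:
`T - T'` is an inner conformal derivation. -/
def fcRelVir {R : Type*} [AddCommGroup R] [Module ℂ R] (DR : Module.End ℂ R)
    (br : ℂ → R → R → R)
    (F F' : {F : FCData R DR // IsFC DR br F ∧ F.P = virasoroP}) : Prop :=
  ∃ c : R, ∀ (l : ℂ) (a : R), F.1.Tm l a - F'.1.Tm l a = br l c a

/-!
By sesquilinearity, the Jacobi identity of a crossed product on `R × ℂ[∂]x` has to be checked only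
on the elements `(a, 0)` and `(0, x)`, where it amounts to (fc1)–(fc8) for the values
`D_λ = (· ↼_λ x)`, `T_λ = (x ▷_λ ·)`, `Q₀(λ,∂) = f_λ(x, x)`; these values determine the extending
maps.

If two crossed products are equivalent via `(u, w)`, then `w` is an automorphism of `ℂ[∂]x`, hence
multiplication by a scalar `β`, and `T_λ - βT'_λ = [u(x)_λ ·]`.  Conversely, (fc2), (fc3) and (fc7)
express the brackets `[D_λ(a)_μ ·]` and `[Q₀(λ,∂)_μ ·]` through `T`, so when the left center is
trivial `T` determines `D` and `Q₀`, and an equality `T_λ - βT'_λ = [c_λ ·]` with `βP = P` yields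
an equivalence with `u(x) = c`.  Since `w` preserves `[x_λ x] = P(λ,∂)x`, every equivalence has
`βP = P`: no condition for `P = 0`, and `β = 1` for `P = ∂ + 2λ`.
-/

namespace IsPolyFun

variable {W W' : Type*} [AddCommGroup W] [Module ℂ W] [AddCommGroup W'] [Module ℂ W']
  {g h : ℂ → W}

theorem zero : IsPolyFun (fun _ : ℂ => (0 : W)) :=
  ⟨0, fun _ => 0, fun _ => by simp⟩

theorem add (hg : IsPolyFun g) (hh : IsPolyFun h) : IsPolyFun (fun l => g l + h l) := by
  obtain ⟨N, c, hc⟩ := hg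
  obtain ⟨M, d, hd⟩ := hh
  have truncate (K L : ℕ) (hKL : K ≤ L) (e : ℕ → W) (l : ℂ) :
      ∑ i ∈ Finset.range L, l ^ i • (if i < K then e i else 0) =
        ∑ i ∈ Finset.range K, l ^ i • e i := by
    rw [← Finset.sum_subset (Finset.range_subset_range.2 hKL) (by simp_all)]
    exact Finset.sum_congr rfl fun i hi => by rw [if_pos (Finset.mem_range.1 hi)]
  refine ⟨max N M, fun i => (if i < N then c i else 0) + (if i < M then d i else 0), fun l => ?_⟩
  simp only [smul_add, Finset.sum_add_distrib]
  rw [truncate N _ (le_max_left N M), truncate M _ (le_max_right N M), hc, hd]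

theorem map (hg : IsPolyFun g) (φ : W →ₗ[ℂ] W') : IsPolyFun (fun l => φ (g l)) := by
  obtain ⟨N, c, hc⟩ := hg
  exact ⟨N, fun i => φ (c i), fun l => by simp [hc]⟩

theorem const_smul (hg : IsPolyFun g) (k : ℂ) : IsPolyFun (fun l => k • g l) :=
  hg.map (k • LinearMap.id)

theorem id_smul (hg : IsPolyFun g) : IsPolyFun (fun l => l • g l) := by
  obtain ⟨N, c, hc⟩ := hg
  refine ⟨N + 1, fun i => Nat.casesOn i 0 c, fun l => ?_⟩
  rw [Finset.sum_range_succ']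
  simp [hc, Finset.smul_sum, smul_smul, pow_succ']

theorem eval_neg_smul (hg : IsPolyFun g) (p : ℂ[X]) :
    IsPolyFun (fun l => p.eval (-l) • g l) := by
  induction p using Polynomial.induction_on with
  | C k => simpa using hg.const_smul k
  | add p q hp hq => simpa [add_smul] using hp.add hq
  | monomial n k ih =>
    have step : IsPolyFun (fun l => (-1 : ℂ) • l • (C k * X ^ n).eval (-l) • g l) :=
      ih.id_smul.const_smul (-1)
    simpa [pow_succ', smul_smul, mul_left_comm] using step

theorem aeval_comp_C_add_X (hg : IsPolyFun g) (D : Module.End ℂ W) (p : ℂ[X]) :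
    IsPolyFun (fun l => aeval D (p.comp (C l + X)) (g l)) := by
  induction p using Polynomial.induction_on with
  | C k => simpa using hg.const_smul k
  | add p q hp hq => simpa using hp.add hq
  | monomial n k ih =>
    have step := ih.id_smul.add (ih.map D)
    have split (l : ℂ) : (C k * X ^ (n + 1)).comp (C l + X) =
        (C l + X) * (C k * X ^ n).comp (C l + X) := by
      simp only [mul_comp, C_comp, X_pow_comp]
      ring
    simp only [split, map_mul, Module.End.mul_apply, map_add, LinearMap.add_apply, aeval_C, aeval_X,
      Module.algebraMap_end_apply] at step ⊢
    exact step

end IsPolyFun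

theorem map_aeval_of_intertwines {U W : Type*} [AddCommGroup U] [Module ℂ U]
    [AddCommGroup W] [Module ℂ W] {DU : Module.End ℂ U} {DW : Module.End ℂ W} (φ : U →ₗ[ℂ] W)
    (hφ : ∀ a, φ (DU a) = DW (φ a)) (p : ℂ[X]) (a : U) :
    φ (aeval DU p a) = aeval DW p (φ a) := by
  induction p using Polynomial.induction_on with
  | C k => simp
  | add p q hp hq => simp [hp, hq]
  | monomial n k ih =>
    rw [show C k * X ^ (n + 1) = X * (C k * X ^ n) by ring]
    simp only [map_mul _ X, Module.End.mul_apply, aeval_X, hφ, ih]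

/-! ### Conformal linear and bilinear maps -/

section Conformal

variable {U V W : Type*} [AddCommGroup U] [Module ℂ U] [AddCommGroup V] [Module ℂ V]
  [AddCommGroup W] [Module ℂ W]

/-- A conformal linear map `V → W[λ]` in evaluated form: `T_λ(∂v) = (∂ + λ) T_λ(v)`. -/
structure IsConformalLinear (DV : Module.End ℂ V) (DW : Module.End ℂ W) (T : ℂ → V → W) :
    Prop where
  lin : ∀ l, IsLinearMap ℂ (T l)
  poly : ∀ v, IsPolyFun (fun l => T l v)
  conf : ∀ l v, T l (DV v) = DW (T l v) + l • T l v

/-- A left conformal linear map `U → W[λ]` in evaluated form: `D_λ(∂u) = -λ D_λ(u)`. -/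
structure IsLeftConformalLinear (DU : Module.End ℂ U) (D : ℂ → U → W) : Prop where
  lin : ∀ l, IsLinearMap ℂ (D l)
  poly : ∀ u, IsPolyFun (fun l => D l u)
  conf : ∀ l u, D l (DU u) = (-l) • D l u

variable {DU : Module.End ℂ U} {DV : Module.End ℂ V} {DW : Module.End ℂ W}

theorem IsLeftConformalLinear.map_aeval {D : ℂ → U → W} (hD : IsLeftConformalLinear DU D)
    (l : ℂ) (p : ℂ[X]) (u : U) : D l (aeval DU p u) = p.eval (-l) • D l u := by
  have h := map_aeval_of_intertwines (DW := algebraMap ℂ (Module.End ℂ W) (-l))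
    ((hD.lin l).mk' (D l)) (hD.conf l) p u
  rwa [aeval_algebraMap_apply, Module.algebraMap_end_apply, coe_aeval_eq_eval] at h

theorem IsConformalLinear.map_aeval {T : ℂ → V → W} (hT : IsConformalLinear DV DW T)
    (l : ℂ) (p : ℂ[X]) (v : V) :
    T l (aeval DV p v) = aeval DW (p.comp (C l + X)) (T l v) := by
  have h := map_aeval_of_intertwines (DU := DV) (DW := aeval DW (C l + X))
    ((hT.lin l).mk' (T l)) (fun v => by simp [hT.conf, add_comm]) p v
  rwa [← aeval_comp] at h

namespace IsConformalBilin

variable {f : ℂ → U → V → W} (hf : IsConformalBilin DU DV DW f)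
include hf

theorem isLeftConformalLinear (b : V) : IsLeftConformalLinear DU (fun l a => f l a b) where
  lin l := ⟨fun a a' => hf.add_left l a a' b, fun c a => hf.smul_left l c a b⟩
  poly a := hf.poly a b
  conf l a := hf.conf_left l a b

theorem isConformalLinear (a : U) : IsConformalLinear DV DW (fun l => f l a) where
  lin l := ⟨hf.add_right l a, fun c => hf.smul_right l c a⟩
  poly := hf.poly a
  conf l := hf.conf_right l a

theorem zero_left (l : ℂ) (b : V) : f l 0 b = 0 :=
  ((hf.isLeftConformalLinear b).lin l).map_zero

theorem zero_right (l : ℂ) (a : U) : f l a 0 = 0 :=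
  ((hf.isConformalLinear a).lin l).map_zero

theorem sub_left (l : ℂ) (a a' : U) (b : V) : f l (a - a') b = f l a b - f l a' b :=
  ((hf.isLeftConformalLinear b).lin l).map_sub a a'

theorem aeval_left (l : ℂ) (p : ℂ[X]) (a : U) (b : V) :
    f l (aeval DU p a) b = p.eval (-l) • f l a b :=
  (hf.isLeftConformalLinear b).map_aeval l p a

theorem aeval_right (l : ℂ) (p : ℂ[X]) (a : U) (b : V) :
    f l a (aeval DV p b) = aeval DW (p.comp (C l + X)) (f l a b) :=
  (hf.isConformalLinear a).map_aeval l p b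

end IsConformalBilin

theorem isConformalBilin_zero : IsConformalBilin DU DV DW (fun _ _ _ => 0) where
  add_left := by simp
  smul_left := by simp
  add_right := by simp
  smul_right := by simp
  poly _ _ := IsPolyFun.zero
  conf_left := by simp
  conf_right := by simp

end Conformal

theorem sub2_C_add_X (P : CPoly2) (l m : ℂ) :
    sub2 P (C m) (C l + X) = (sub2 P (C m) X).comp (C l + X) := by
  unfold sub2
  rw [← coe_compRingHom_apply, hom_eval₂]
  congr 1
  · ext <;> simp
  · simp

theorem ev2_eq_eval_sub2 (P : CPoly2) (l t : ℂ) : ev2 P l t = (sub2 P (C l) X).eval t := by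
  have aeval_X_eq_id : (aeval (X : ℂ[X])).toRingHom = RingHom.id ℂ[X] := by ext <;> simp
  rw [ev2, sub2, aeval_X_eq_id, eval₂_id]

theorem sub2_smul (β : ℂ) (P : CPoly2) (lam del : ℂ[X]) :
    sub2 (β • P) lam del = β • sub2 P lam del := by
  have smul_eq : β • P = C (C β) * P := by
    ext : 1
    simp [smul_eq_C_mul]
  simp [sub2, smul_eq, smul_eq_C_mul]

theorem ev2_smul (β : ℂ) (P : CPoly2) (l t : ℂ) : ev2 (β • P) l t = β * ev2 P l t := by
  simp [ev2]

theorem sub2_virasoroP (l : ℂ) : sub2 virasoroP (C l) X = X + C (2 * l) := by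
  have smul_X : (2 : ℂ) • (X : CPoly2) = C (C 2) * X := by
    ext : 1
    simp [smul_eq_C_mul]
  simp [sub2, virasoroP, smul_X]

/-! ### Generators and the Jacobi identity -/

section Jacobi

variable {M : Type*} [AddCommGroup M] [Module ℂ M]

/-- Membership in the `ℂ[∂]`-submodule generated by `S`, where `∂` acts as `D`. -/
inductive ConformalSpan (D : Module.End ℂ M) (S : Set M) : M → Prop
  | mem {a : M} : a ∈ S → ConformalSpan D S a
  | add {a b : M} : ConformalSpan D S a → ConformalSpan D S b → ConformalSpan D S (a + b)
  | smul (c : ℂ) {a : M} : ConformalSpan D S a → ConformalSpan D S (c • a)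
  | map {a : M} : ConformalSpan D S a → ConformalSpan D S (D a)

/-- The Jacobi identity of the `λ`-bracket `br` for a single triple of elements, with the two
formal parameters evaluated at `l` and `m`. -/
def JacobiAt (br : ℂ → M → M → M) (l m : ℂ) (a b c : M) : Prop :=
  br l a (br m b c) = br (l + m) (br l a b) c + br m b (br l a c)

variable {D : Module.End ℂ M} {br : ℂ → M → M → M} (hbr : IsConformalBilin D D D br) {S : Set M}
  {l m : ℂ} {a b c : M}
include hbr

theorem JacobiAt.of_span_left (ha : ConformalSpan D S a) (h : ∀ s ∈ S, JacobiAt br l m s b c) :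
    JacobiAt br l m a b c := by
  unfold JacobiAt at *
  induction ha with
  | mem hs => exact h _ hs
  | add _ _ ih ih' =>
    simp only [hbr.add_left, hbr.add_right, ih, ih']
    abel
  | smul k _ ih => simp only [hbr.smul_left, hbr.smul_right, ih, smul_add]
  | map _ ih =>
    simp only [hbr.smul_left, hbr.smul_right, hbr.conf_left, ih]
    module

theorem JacobiAt.of_span_middle (hb : ConformalSpan D S b)
    (h : ∀ s ∈ S, JacobiAt br l m a s c) : JacobiAt br l m a b c := by
  unfold JacobiAt at *
  induction hb with
  | mem hs => exact h _ hs
  | add _ _ ih ih' =>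
    simp only [hbr.add_left, hbr.add_right, ih, ih']
    abel
  | smul k _ ih => simp only [hbr.smul_left, hbr.smul_right, ih, smul_add]
  | map _ ih =>
    simp only [hbr.add_left, hbr.smul_left, hbr.smul_right, hbr.conf_left, hbr.conf_right, ih]
    module

theorem JacobiAt.of_span_right (hc : ConformalSpan D S c)
    (h : ∀ s ∈ S, JacobiAt br l m a b s) : JacobiAt br l m a b c := by
  unfold JacobiAt at *
  induction hc with
  | mem hs => exact h _ hs
  | add _ _ ih ih' =>
    simp only [hbr.add_right, ih, ih']
    abel
  | smul k _ ih => simp only [hbr.smul_right, ih, smul_add]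
  | map _ ih =>
    simp only [hbr.add_right, hbr.smul_right, hbr.conf_right, ih, map_add]
    module

theorem isLeibnizConformal_of_jacobiAt_generators (hS : ∀ a, ConformalSpan D S a)
    (h : ∀ l m, ∀ a ∈ S, ∀ b ∈ S, ∀ c ∈ S, JacobiAt br l m a b c) : IsLeibnizConformal D br where
  bilin := hbr
  jacobi l m a b c :=
    JacobiAt.of_span_left hbr (hS a) fun s hs => .of_span_middle hbr (hS b) fun t ht =>
      .of_span_right hbr (hS c) fun r hr => h l m s hs t ht r hr

end Jacobi

theorem conformalSpan_prod {M N : Type*} [AddCommGroup M] [Module ℂ M] [AddCommGroup N]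
    [Module ℂ N] (DM : Module.End ℂ M) {DN : Module.End ℂ N} {S : Set N}
    (hS : ∀ y, ConformalSpan DN S y) (p : M × N) :
    ConformalSpan (DM.prodMap DN)
      (Set.range (LinearMap.inl ℂ M N) ∪ LinearMap.inr ℂ M N '' S) p := by
  obtain ⟨a, y⟩ := p
  have inr_mem : ConformalSpan (DM.prodMap DN)
      (Set.range (LinearMap.inl ℂ M N) ∪ LinearMap.inr ℂ M N '' S) (0, y) := by
    induction hS y with
    | mem hs => exact .mem (.inr ⟨_, hs, rfl⟩)
    | add _ _ ih ih' => simpa using ih.add ih'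
    | smul c _ ih => simpa using ih.smul c
    | map _ ih => simpa using ih.map
  simpa using (ConformalSpan.mem (.inl ⟨a, rfl⟩)).add inr_mem

/-! ### Free modules of rank one -/

section FreeRankOne

variable {Q R : Type*} [AddCommGroup Q] [Module ℂ Q] [AddCommGroup R] [Module ℂ R]

/-- `Q = ℂ[∂]x` is free of rank one over `ℂ[∂]` with basis `x`, where `∂` acts as `DQ`. -/
def IsFreeGenerator (DQ : Module.End ℂ Q) (x : Q) : Prop :=
  ∀ q : Q, ∃! p : ℂ[X], aeval DQ p x = q

namespace IsFreeGenerator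

variable {DQ : Module.End ℂ Q} {x : Q} (hx : IsFreeGenerator DQ x)
include hx

theorem exists_aeval_eq (y : Q) : ∃ p : ℂ[X], aeval DQ p x = y :=
  (hx y).exists

theorem aeval_injective {p q : ℂ[X]} (h : aeval DQ p x = aeval DQ q x) : p = q :=
  (hx _).unique h rfl

theorem map_ne_zero : DQ x ≠ 0 := fun h =>
  X_ne_zero (hx.aeval_injective (p := X) (q := 0) (by simpa using h))

/-- The `ℂ[∂]`-coordinate `p` of an element `p(∂)x` of `Q`. -/
def coord : Q ≃ₗ[ℂ] ℂ[X] :=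
  (LinearEquiv.ofBijective ((LinearMap.applyₗ x).comp (aeval DQ).toLinearMap)
    ⟨fun _ _ h => hx.aeval_injective h, hx.exists_aeval_eq⟩).symm

@[simp]
theorem coord_aeval (p : ℂ[X]) : hx.coord (aeval DQ p x) = p :=
  (LinearEquiv.symm_apply_eq _).2 rfl

@[simp]
theorem coord_self : hx.coord x = 1 := by
  simpa using hx.coord_aeval 1

theorem coord_map (y : Q) : hx.coord (DQ y) = X * hx.coord y := by
  obtain ⟨p, rfl⟩ := hx.exists_aeval_eq y
  rw [hx.coord_aeval, ← hx.coord_aeval (X * p), map_mul, aeval_X, Module.End.mul_apply]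

theorem conformalSpan (y : Q) : ConformalSpan DQ {x} y := by
  obtain ⟨p, rfl⟩ := hx.exists_aeval_eq y
  induction p using Polynomial.induction_on with
  | C k => simpa using (ConformalSpan.mem (Set.mem_singleton x)).smul k
  | add p q hp hq => simpa using hp.add hq
  | monomial n k ih =>
    rw [show C k * X ^ (n + 1) = X * (C k * X ^ n) by ring, map_mul, Module.End.mul_apply, aeval_X]
    exact ih.map

/-- The `ℂ[∂]`-linear map `Q → R` sending the free generator `x` to `c`. -/
def lift (DR : Module.End ℂ R) (c : R) : Q →ₗ[ℂ] R :=
  ((LinearMap.applyₗ c).comp (aeval DR).toLinearMap).comp hx.coord.toLinearMap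

theorem lift_aeval (DR : Module.End ℂ R) (c : R) (p : ℂ[X]) :
    hx.lift DR c (aeval DQ p x) = aeval DR p c := by
  simp [lift]

theorem lift_map (DR : Module.End ℂ R) (c : R) (y : Q) :
    hx.lift DR c (DQ y) = DR (hx.lift DR c y) := by
  simp [lift, coord_map]

theorem exists_eq_smul_of_commutes (w : Q ≃ₗ[ℂ] Q) (hw : ∀ y, w (DQ y) = DQ (w y)) :
    ∃ β : ℂ, β ≠ 0 ∧ ∀ y, w y = β • y := by
  have w_aeval := map_aeval_of_intertwines w.toLinearMap hw
  obtain ⟨p, hp⟩ := hx.exists_aeval_eq (w x)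
  obtain ⟨q, hq⟩ := hx.exists_aeval_eq (w.symm x)
  have mul_eq_one : q * p = 1 := hx.aeval_injective <| by
    have w_symm_x := w_aeval q x
    rw [hq] at w_symm_x
    simpa [hp] using w_symm_x.symm
  obtain ⟨β, hβ, rfl⟩ := Polynomial.isUnit_iff.1 (IsUnit.of_mul_eq_one_right q mul_eq_one)
  refine ⟨β, hβ.ne_zero, fun y => ?_⟩
  obtain ⟨r, rfl⟩ := hx.exists_aeval_eq y
  simpa [← hp] using w_aeval r x

end IsFreeGenerator

end FreeRankOne

section Extension

variable {Q U V W : Type*} [AddCommGroup Q] [Module ℂ Q] [AddCommGroup U] [Module ℂ U]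
  [AddCommGroup V] [Module ℂ V] [AddCommGroup W] [Module ℂ W] {DQ : Module.End ℂ Q}
  {DU : Module.End ℂ U} {DV : Module.End ℂ V} {DW : Module.End ℂ W} {x : Q}

namespace IsFreeGenerator

variable (hx : IsFreeGenerator DQ x)

/-- The conformal linear extension `p(∂)x ↦ p(∂ + λ) g(λ)` of a polynomial function `g` with
values in `W`. -/
def extendConformal (DW : Module.End ℂ W) (g : ℂ → W) (l : ℂ) (y : Q) : W :=
  aeval DW ((hx.coord y).comp (C l + X)) (g l)

/-- The extension of a family `T_λ` on `V` to a family on `Q × V` that is left conformal linear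
in its first argument: `(p(∂)x, v) ↦ p(-λ) T_λ(v)`. -/
def extendLeft {V : Type*} (T : ℂ → V → W) (l : ℂ) (y : Q) (v : V) : W :=
  (hx.coord y).eval (-l) • T l v

@[simp]
theorem extendConformal_self (g : ℂ → W) (l : ℂ) : hx.extendConformal DW g l x = g l := by
  simp [extendConformal]

@[simp]
theorem extendLeft_self {V : Type*} (T : ℂ → V → W) (l : ℂ) (v : V) :
    hx.extendLeft T l x v = T l v := by
  simp [extendLeft]

theorem isConformalLinear_extendConformal {g : ℂ → W} (hg : IsPolyFun g) :
    IsConformalLinear DQ DW (hx.extendConformal DW g) where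
  lin l := ⟨fun y z => by simp [extendConformal], fun c y => by simp [extendConformal]⟩
  poly y := hg.aeval_comp_C_add_X DW (hx.coord y)
  conf l y := by simp [extendConformal, coord_map, add_comm]

theorem isConformalBilin_extendConformal {D : ℂ → U → W} (hD : IsLeftConformalLinear DU D) :
    IsConformalBilin DU DQ DW fun l u => hx.extendConformal DW (fun l => D l u) l where
  add_left l a a' y := by simp [extendConformal, (hD.lin l).map_add]
  smul_left l c a y := by simp [extendConformal, (hD.lin l).map_smul]
  add_right l a := ((hx.isConformalLinear_extendConformal (hD.poly a)).lin l).map_add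
  smul_right l c a := ((hx.isConformalLinear_extendConformal (hD.poly a)).lin l).map_smul c
  poly a := (hx.isConformalLinear_extendConformal (hD.poly a)).poly
  conf_left l a y := by simp [extendConformal, hD.conf]
  conf_right l a := (hx.isConformalLinear_extendConformal (hD.poly a)).conf l

theorem isConformalBilin_extendLeft {T : ℂ → V → W} (hT : IsConformalLinear DV DW T) :
    IsConformalBilin DQ DV DW (hx.extendLeft T) where
  add_left l y z v := by simp [extendLeft, add_smul]
  smul_left l c y v := by simp [extendLeft, mul_smul]
  add_right l y v v' := by simp [extendLeft, (hT.lin l).map_add]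
  smul_right l c y v := by simp [extendLeft, (hT.lin l).map_smul, smul_comm c]
  poly y v := (hT.poly v).eval_neg_smul (hx.coord y)
  conf_left l y v := by simp [extendLeft, coord_map, mul_smul]
  conf_right l y v := by simp [extendLeft, hT.conf, smul_comm l]

end IsFreeGenerator

end Extension

/-! ### Crossed products -/

section CrossedProduct

variable {R Q : Type*} [AddCommGroup R] [Module ℂ R] [AddCommGroup Q] [Module ℂ Q]
  {DR : Module.End ℂ R} {DQ : Module.End ℂ Q} {br : ℂ → R → R → R}
  {lh : ℂ → R → Q → R} {rh : ℂ → R → Q → Q} {lt : ℂ → Q → R → Q} {rt : ℂ → Q → R → R}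
  {fm : ℂ → Q → Q → R} {bq : ℂ → Q → Q → Q}

theorem isConformalBilin_unifiedBracket (hbr : IsConformalBilin DR DR DR br)
    (h : IsExtendingDatum DR DQ lh rh lt rt fm bq) :
    IsConformalBilin (DR.prodMap DQ) (DR.prodMap DQ) (DR.prodMap DQ)
      (unifiedBracket br lh rh lt rt fm bq) := by
  obtain ⟨hlh, hrh, hlt, hrt, hfm, hbq⟩ := h
  constructor
  case poly =>
    intro p q
    have poly_fst := (((hbr.poly p.1 q.1).add (hlh.poly p.1 q.2)).add (hrt.poly p.2 q.1)).add
      (hfm.poly p.2 q.2)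
    have poly_snd := ((hrh.poly p.1 q.2).add (hlt.poly p.2 q.1)).add (hbq.poly p.2 q.2)
    simpa [unifiedBracket] using
      (poly_fst.map (LinearMap.inl ℂ R Q)).add (poly_snd.map (LinearMap.inr ℂ R Q))
  case add_left =>
    intros
    ext <;> simp only [unifiedBracket, Prod.fst_add, Prod.snd_add, hbr.add_left, hlh.add_left,
      hrh.add_left, hlt.add_left, hrt.add_left, hfm.add_left, hbq.add_left] <;> abel
  case smul_left =>
    intros
    ext <;> simp only [unifiedBracket, Prod.smul_fst, Prod.smul_snd, hbr.smul_left, hlh.smul_left,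
      hrh.smul_left, hlt.smul_left, hrt.smul_left, hfm.smul_left, hbq.smul_left, smul_add]
  case add_right =>
    intros
    ext <;> simp only [unifiedBracket, Prod.fst_add, Prod.snd_add, hbr.add_right, hlh.add_right,
      hrh.add_right, hlt.add_right, hrt.add_right, hfm.add_right, hbq.add_right] <;> abel
  case smul_right =>
    intros
    ext <;> simp only [unifiedBracket, Prod.smul_fst, Prod.smul_snd, hbr.smul_right,
      hlh.smul_right, hrh.smul_right, hlt.smul_right, hrt.smul_right, hfm.smul_right,
      hbq.smul_right, smul_add]
  case conf_left =>
    intros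
    ext <;> simp only [unifiedBracket, LinearMap.prodMap_apply, Prod.smul_fst, Prod.smul_snd,
      hbr.conf_left, hlh.conf_left, hrh.conf_left, hlt.conf_left, hrt.conf_left, hfm.conf_left,
      hbq.conf_left, smul_add]
  case conf_right =>
    intros
    ext <;> simp only [unifiedBracket, LinearMap.prodMap_apply, Prod.fst_add, Prod.snd_add,
      Prod.smul_fst, Prod.smul_snd, hbr.conf_right, hlh.conf_right, hrh.conf_right,
      hlt.conf_right, hrt.conf_right, hfm.conf_right, hbq.conf_right, smul_add, map_add] <;> abel

/-- The bracket of the crossed product: the unified product with trivial `⇀` and `◁`. -/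
abbrev crossedBracket (br : ℂ → R → R → R) (lh : ℂ → R → Q → R) (rt : ℂ → Q → R → R)
    (fm : ℂ → Q → Q → R) (bq : ℂ → Q → Q → Q) : ℂ → R × Q → R × Q → R × Q :=
  unifiedBracket br lh (fun _ _ _ => 0) (fun _ _ _ => 0) rt fm bq

section JacobiOnFactors

variable (hbr : IsConformalBilin DR DR DR br)
  (h : IsExtendingDatum DR DQ lh (fun _ _ _ => 0) (fun _ _ _ => 0) rt fm bq)
  (l m : ℂ) (a b c : R) (y z w : Q)
include h

theorem jacobiAt_inl_inl_inl_iff :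
    JacobiAt (crossedBracket br lh rt fm bq) l m (a, 0) (b, 0) (c, 0) ↔ JacobiAt br l m a b c := by
  simp [JacobiAt, unifiedBracket, h.lh_bilin.zero_right, h.rt_bilin.zero_left,
    h.fm_bilin.zero_left, h.bq_bilin.zero_left]

include hbr

theorem jacobiAt_inl_inl_inr_iff :
    JacobiAt (crossedBracket br lh rt fm bq) l m (a, 0) (b, 0) (0, y) ↔
      lh (l + m) (br l a b) y = br l a (lh m b y) - br m b (lh l a y) := by
  simp [JacobiAt, unifiedBracket, hbr.zero_right, h.lh_bilin.zero_right, h.rt_bilin.zero_left,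
    h.fm_bilin.zero_left, h.bq_bilin.zero_left, eq_sub_iff_add_eq, eq_comm]

theorem jacobiAt_inl_inr_inl_iff :
    JacobiAt (crossedBracket br lh rt fm bq) l m (a, 0) (0, y) (b, 0) ↔
      rt m y (br l a b) = br l a (rt m y b) - br (l + m) (lh l a y) b := by
  simp [JacobiAt, unifiedBracket, hbr.zero_left, hbr.zero_right, h.lh_bilin.zero_left,
    h.lh_bilin.zero_right, h.rt_bilin.zero_left, h.fm_bilin.zero_left, h.fm_bilin.zero_right,
    h.bq_bilin.zero_left, h.bq_bilin.zero_right, eq_sub_iff_add_eq', eq_comm]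

theorem jacobiAt_inr_inl_inl_iff :
    JacobiAt (crossedBracket br lh rt fm bq) m l (0, y) (a, 0) (b, 0) ↔
      rt m y (br l a b) = br l a (rt m y b) + br (l + m) (rt m y a) b := by
  simp [JacobiAt, unifiedBracket, hbr.zero_left, h.lh_bilin.zero_left,
    h.lh_bilin.zero_right, h.rt_bilin.zero_left, h.fm_bilin.zero_left, h.fm_bilin.zero_right,
    h.bq_bilin.zero_left, h.bq_bilin.zero_right, add_comm]

theorem jacobiAt_inl_inr_inr_iff :
    JacobiAt (crossedBracket br lh rt fm bq) l m (a, 0) (0, y) (0, z) ↔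
      lh l a (bq m y z) = lh (l + m) (lh l a y) z + rt m y (lh l a z) - br l a (fm m y z) := by
  simp [JacobiAt, unifiedBracket, hbr.zero_left, hbr.zero_right, h.lh_bilin.zero_left,
    h.rt_bilin.zero_left, h.rt_bilin.zero_right, h.fm_bilin.zero_left, h.fm_bilin.zero_right,
    h.bq_bilin.zero_left, h.bq_bilin.zero_right, eq_sub_iff_add_eq']

theorem jacobiAt_inr_inl_inr_iff :
    JacobiAt (crossedBracket br lh rt fm bq) m l (0, y) (a, 0) (0, z) ↔
      lh l a (bq m y z) = rt m y (lh l a z) - lh (l + m) (rt m y a) z - br l a (fm m y z) := by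
  simp [JacobiAt, unifiedBracket, hbr.zero_left, hbr.zero_right, h.lh_bilin.zero_left,
    h.rt_bilin.zero_left, h.rt_bilin.zero_right, h.fm_bilin.zero_left, h.fm_bilin.zero_right,
    h.bq_bilin.zero_left, h.bq_bilin.zero_right, eq_sub_iff_add_eq', add_comm l m, eq_comm]

theorem jacobiAt_inr_inr_inl_iff :
    JacobiAt (crossedBracket br lh rt fm bq) l m (0, y) (0, z) (a, 0) ↔
      rt (l + m) (bq l y z) a =
        rt l y (rt m z a) - br (l + m) (fm l y z) a - rt m z (rt l y a) := by
  have commute_rt : JacobiAt (crossedBracket br lh rt fm bq) l m (0, y) (0, z) (a, 0) ↔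
      rt l y (rt m z a) =
        br (l + m) (fm l y z) a + rt (l + m) (bq l y z) a + rt m z (rt l y a) := by
    simp [JacobiAt, unifiedBracket, hbr.zero_left, h.lh_bilin.zero_left, h.lh_bilin.zero_right,
      h.rt_bilin.zero_right, h.fm_bilin.zero_right, h.bq_bilin.zero_right]
  rw [commute_rt, sub_sub, eq_sub_iff_add_eq', eq_comm]
  exact Eq.congr_left (by abel)

theorem jacobiAt_inr_inr_inr_iff :
    JacobiAt (crossedBracket br lh rt fm bq) l m (0, y) (0, z) (0, w) ↔
      rt l y (fm m z w) = lh (l + m) (fm l y z) w + fm (l + m) (bq l y z) w + rt m z (fm l y w)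
        + fm m z (bq l y w) - fm l y (bq m z w) ∧ JacobiAt bq l m y z w := by
  simp [JacobiAt, unifiedBracket, hbr.zero_left, hbr.zero_right, h.lh_bilin.zero_left,
    h.rt_bilin.zero_right, eq_sub_iff_add_eq, add_assoc]

end JacobiOnFactors

/-- The polynomial `P(λ,∂)` describing the bracket of the generator: `[x_λ x] = P(λ,∂)x`. -/
def IsStructurePolynomial (DQ : Module.End ℂ Q) (bq : ℂ → Q → Q → Q) (x : Q) (P : CPoly2) : Prop :=
  ∀ l, bq l x x = aeval DQ (sub2 P (C l) X) x

theorem isStructurePolynomial_zero {x : Q} (hbq : ∀ l, bq l x x = 0) :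
    IsStructurePolynomial DQ bq x 0 := fun l => by
  simp [hbq, sub2]

theorem isStructurePolynomial_virasoroP {x : Q} (hbq : ∀ l, bq l x x = DQ x + (2 * l) • x) :
    IsStructurePolynomial DQ bq x virasoroP := fun l => by
  simp [hbq, sub2_virasoroP, -map_mul]

namespace IsStructurePolynomial

variable {U W : Type*} [AddCommGroup U] [Module ℂ U] [AddCommGroup W] [Module ℂ W]
  {DU : Module.End ℂ U} {DW : Module.End ℂ W} {x : Q} {P : CPoly2}
  (hP : IsStructurePolynomial DQ bq x P)
include hP

theorem map_bracket_left {f : ℂ → Q → U → W} (hf : IsConformalBilin DQ DU DW f) (l m : ℂ) (b : U) :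
    f (l + m) (bq l x x) b = ev2 P l (-l - m) • f (l + m) x b := by
  rw [hP, hf.aeval_left, ev2_eq_eval_sub2, neg_add']

theorem map_bracket_right {f : ℂ → U → Q → W} (hf : IsConformalBilin DU DQ DW f) (l m : ℂ)
    (a : U) : f l a (bq m x x) = aeval DW (sub2 P (C m) (C l + X)) (f l a x) := by
  rw [hP, hf.aeval_right, sub2_C_add_X]

theorem jacobiAt_self_iff (hx : IsFreeGenerator DQ x) (hbq : IsConformalBilin DQ DQ DQ bq)
    (l m : ℂ) :
    JacobiAt bq l m x x x ↔
      ev2 P l (-l - m) • sub2 P (C (l + m)) X + sub2 P (C l) (C m + X) * sub2 P (C m) X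
        - sub2 P (C m) (C l + X) * sub2 P (C l) X = 0 := by
  have aeval_x : JacobiAt bq l m x x x ↔ aeval DQ (sub2 P (C m) (C l + X) * sub2 P (C l) X) x =
      aeval DQ (ev2 P l (-l - m) • sub2 P (C (l + m)) X +
        sub2 P (C l) (C m + X) * sub2 P (C m) X) x := by
    rw [JacobiAt, hP.map_bracket_right hbq, hP.map_bracket_left hbq, hP.map_bracket_right hbq]
    simp only [hP l, hP m, hP (l + m), map_mul, map_add, map_smul, Module.End.mul_apply,
      LinearMap.add_apply, LinearMap.smul_apply]
  rw [aeval_x, sub_eq_zero, eq_comm]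
  exact ⟨hx.aeval_injective, fun h => h ▸ rfl⟩

theorem smul_bracket_eq (hx : IsFreeGenerator DQ x) (hbq : IsConformalBilin DQ DQ DQ bq) {β : ℂ}
    (hβ : β • P = P) (l : ℂ) (y z : Q) : β • bq l y z = bq l y z := by
  have smul_self : β • bq l x x = bq l x x := by
    rw [hP, ← LinearMap.smul_apply, ← map_smul, ← sub2_smul, hβ]
  obtain ⟨p, rfl⟩ := hx.exists_aeval_eq y
  obtain ⟨q, rfl⟩ := hx.exists_aeval_eq z
  rw [hbq.aeval_left, hbq.aeval_right, smul_comm, ← map_smul, smul_self]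

end IsStructurePolynomial

/-- The flag datum `(↼_λ x, x ▷_λ, f_λ(x, x), P)` of an extending datum of `R` by `ℂ[∂]x`: the
values of the extending maps on the generator. -/
def IsExtendingDatum.flag (h : IsExtendingDatum DR DQ lh rh lt rt fm bq) (x : Q) (P : CPoly2) :
    FCData R DR where
  Dm l a := lh l a x
  Tm l a := rt l x a
  Q0 l := fm l x x
  P := P
  Dm_lin := (h.lh_bilin.isLeftConformalLinear x).lin
  Dm_poly := (h.lh_bilin.isLeftConformalLinear x).poly
  Dm_conf := (h.lh_bilin.isLeftConformalLinear x).conf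
  Tm_lin := (h.rt_bilin.isConformalLinear x).lin
  Tm_poly := (h.rt_bilin.isConformalLinear x).poly
  Tm_conf := (h.rt_bilin.isConformalLinear x).conf
  Q0_poly := h.fm_bilin.poly x x

section FlagDatum

variable {x : Q} {P : CPoly2}
  (h : IsExtendingDatum DR DQ lh (fun _ _ _ => 0) (fun _ _ _ => 0) rt fm bq)
include h

theorem isFC_flag_of_isLeibnizConformal (hbr : IsConformalBilin DR DR DR br)
    (hx : IsFreeGenerator DQ x) (hP : IsStructurePolynomial DQ bq x P)
    (hcrossed : IsLeibnizConformal (DR.prodMap DQ) (crossedBracket br lh rt fm bq)) :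
    IsFC DR br (h.flag x P) := by
  have jac : ∀ l m p q r, JacobiAt (crossedBracket br lh rt fm bq) l m p q r := hcrossed.jacobi
  have jac_inl_inr_inr (l m a) := (jacobiAt_inl_inr_inr_iff hbr h l m a x x).1 (jac ..)
  have jac_inr_inl_inr (l m a) := (jacobiAt_inr_inl_inr_iff hbr h l m a x x).1 (jac ..)
  have jac_inr_inr_inl (l m a) := (jacobiAt_inr_inr_inl_iff hbr h l m a x x).1 (jac ..)
  have jac_inr_inr_inr (l m) := (jacobiAt_inr_inr_inr_iff hbr h l m x x x).1 (jac ..)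
  refine ⟨fun l m a b => (jacobiAt_inl_inl_inr_iff hbr h l m a b x).1 (jac ..),
    fun l m a b => (jacobiAt_inl_inr_inl_iff hbr h l m a b x).1 (jac ..),
    fun l m a b => (jacobiAt_inr_inl_inl_iff hbr h l m a b x).1 (jac ..),
    fun l m a => ?fc4, fun l m a => ?fc5,
    fun l m => (hP.jacobiAt_self_iff hx h.bq_bilin l m).1 (jac_inr_inr_inr l m).2,
    fun l m a => ?fc7, fun l m => ?fc8⟩
  case fc4 => exact (hP.map_bracket_right h.lh_bilin l m a).symm.trans (jac_inl_inr_inr l m a)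
  case fc5 =>
    have := (jac_inl_inr_inr l m a).symm.trans (jac_inr_inl_inr l m a)
    simp only [IsExtendingDatum.flag]
    linear_combination (norm := module) this
  case fc7 => exact (hP.map_bracket_left h.rt_bilin l m a).symm.trans (jac_inr_inr_inl l m a)
  case fc8 =>
    have := (jac_inr_inr_inr l m).1
    rwa [hP.map_bracket_left h.fm_bilin, hP.map_bracket_right h.fm_bilin,
      hP.map_bracket_right h.fm_bilin] at this

theorem isLeibnizConformal_of_isFC_flag (hLeib : IsLeibnizConformal DR br)
    (hx : IsFreeGenerator DQ x) (hP : IsStructurePolynomial DQ bq x P)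
    (hF : IsFC DR br (h.flag x P)) :
    IsLeibnizConformal (DR.prodMap DQ) (crossedBracket br lh rt fm bq) := by
  obtain ⟨fc1, fc2, fc3, fc4, fc5, fc6, fc7, fc8⟩ := hF
  have hbr := hLeib.bilin
  have span (p : R × Q) : ConformalSpan (DR.prodMap DQ)
      (Set.range (LinearMap.inl ℂ R Q) ∪ {LinearMap.inr ℂ R Q x}) p := by
    simpa only [Set.image_singleton] using conformalSpan_prod DR hx.conformalSpan p
  refine isLeibnizConformal_of_jacobiAt_generators (isConformalBilin_unifiedBracket hbr h) span ?_
  rintro l m _ (⟨a, rfl⟩ | rfl) _ (⟨b, rfl⟩ | rfl) _ (⟨c, rfl⟩ | rfl)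
  · exact (jacobiAt_inl_inl_inl_iff h l m a b c).2 (hLeib.jacobi l m a b c)
  · exact (jacobiAt_inl_inl_inr_iff hbr h l m a b x).2 (fc1 l m a b)
  · exact (jacobiAt_inl_inr_inl_iff hbr h l m a c x).2 (fc2 l m a c)
  · exact (jacobiAt_inl_inr_inr_iff hbr h l m a x x).2
      ((hP.map_bracket_right h.lh_bilin l m a).trans (fc4 l m a))
  · exact (jacobiAt_inr_inl_inl_iff hbr h m l b c x).2 (fc3 m l b c)
  · refine (jacobiAt_inr_inl_inr_iff hbr h m l b x x).2
      ((hP.map_bracket_right h.lh_bilin m l b).trans ((fc4 m l b).trans ?_))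
    have := fc5 m l b
    simp only [IsExtendingDatum.flag] at this ⊢
    linear_combination (norm := module) this
  · exact (jacobiAt_inr_inr_inl_iff hbr h l m c x x).2
      ((hP.map_bracket_left h.rt_bilin l m c).trans (fc7 l m c))
  · refine (jacobiAt_inr_inr_inr_iff hbr h l m x x x).2
      ⟨?_, (hP.jacobiAt_self_iff hx h.bq_bilin l m).2 (fc6 l m)⟩
    rw [hP.map_bracket_left h.fm_bilin, hP.map_bracket_right h.fm_bilin,
      hP.map_bracket_right h.fm_bilin]
    exact fc8 l m

end FlagDatum

theorem FCData.ext_of_forall {F G : FCData R DR} (hDm : ∀ l a, F.Dm l a = G.Dm l a)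
    (hTm : ∀ l a, F.Tm l a = G.Tm l a) (hQ0 : ∀ l, F.Q0 l = G.Q0 l) (hP : F.P = G.P) : F = G := by
  cases F
  cases G
  simp only [FCData.mk.injEq]
  exact ⟨funext₂ hDm, funext₂ hTm, funext hQ0, hP⟩

namespace CrossedStruct

theorem ext_of_forall {Ω Ω' : CrossedStruct R Q DR DQ br bq}
    (hlh : ∀ l a y, Ω.lh l a y = Ω'.lh l a y) (hrt : ∀ l y a, Ω.rt l y a = Ω'.rt l y a)
    (hfm : ∀ l y z, Ω.fm l y z = Ω'.fm l y z) : Ω = Ω' := by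
  cases Ω
  cases Ω'
  simp only [CrossedStruct.mk.injEq]
  exact ⟨funext₃ hlh, funext₃ hrt, funext₃ hfm⟩

variable {x : Q} {P : CPoly2}

theorem flag_injective (hx : IsFreeGenerator DQ x) :
    Function.Injective fun Ω : CrossedStruct R Q DR DQ br bq => Ω.datum.flag x P := by
  intro Ω Ω' h
  have lh_x (l : ℂ) (a : R) : Ω.lh l a x = Ω'.lh l a x := congrFun₂ (congrArg FCData.Dm h) l a
  have rt_x (l : ℂ) (a : R) : Ω.rt l x a = Ω'.rt l x a := congrFun₂ (congrArg FCData.Tm h) l a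
  have fm_x (l : ℂ) : Ω.fm l x x = Ω'.fm l x x := congrFun (congrArg FCData.Q0 h) l
  apply ext_of_forall
  · intro l a y
    obtain ⟨p, rfl⟩ := hx.exists_aeval_eq y
    rw [Ω.datum.lh_bilin.aeval_right, Ω'.datum.lh_bilin.aeval_right, lh_x]
  · intro l y a
    obtain ⟨p, rfl⟩ := hx.exists_aeval_eq y
    rw [Ω.datum.rt_bilin.aeval_left, Ω'.datum.rt_bilin.aeval_left, rt_x]
  · intro l y z
    obtain ⟨p, rfl⟩ := hx.exists_aeval_eq y
    obtain ⟨q, rfl⟩ := hx.exists_aeval_eq z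
    rw [Ω.datum.fm_bilin.aeval_left, Ω'.datum.fm_bilin.aeval_left,
      Ω.datum.fm_bilin.aeval_right, Ω'.datum.fm_bilin.aeval_right, fm_x]

theorem exists_flag_eq (hLeib : IsLeibnizConformal DR br) (hx : IsFreeGenerator DQ x)
    (hbq : IsConformalBilin DQ DQ DQ bq) {F : FCData R DR} (hF : IsFC DR br F)
    (hP : IsStructurePolynomial DQ bq x F.P) :
    ∃ Ω : CrossedStruct R Q DR DQ br bq, Ω.datum.flag x F.P = F := by
  have datum : IsExtendingDatum DR DQ (fun l a => hx.extendConformal DR (fun l => F.Dm l a) l)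
      (fun _ _ _ => 0) (fun _ _ _ => 0) (hx.extendLeft F.Tm)
      (hx.extendLeft (hx.extendConformal DR F.Q0)) bq :=
    { lh_bilin := hx.isConformalBilin_extendConformal ⟨F.Dm_lin, F.Dm_poly, F.Dm_conf⟩
      rh_bilin := isConformalBilin_zero
      lt_bilin := isConformalBilin_zero
      rt_bilin := hx.isConformalBilin_extendLeft ⟨F.Tm_lin, F.Tm_poly, F.Tm_conf⟩
      fm_bilin := hx.isConformalBilin_extendLeft (hx.isConformalLinear_extendConformal F.Q0_poly)
      bq_bilin := hbq }
  have flag_eq : datum.flag x F.P = F :=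
    FCData.ext_of_forall (by simp [IsExtendingDatum.flag]) (by simp [IsExtendingDatum.flag])
      (by simp [IsExtendingDatum.flag]) rfl
  exact ⟨⟨_, _, _, datum,
    isLeibnizConformal_of_isFC_flag datum hLeib hx hP (flag_eq.symm ▸ hF)⟩, flag_eq⟩

theorem isFC_flag (hbr : IsConformalBilin DR DR DR br) (hx : IsFreeGenerator DQ x)
    (hP : IsStructurePolynomial DQ bq x P) (Ω : CrossedStruct R Q DR DQ br bq) :
    IsFC DR br (Ω.datum.flag x P) :=
  isFC_flag_of_isLeibnizConformal Ω.datum hbr hx hP Ω.leib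

end CrossedStruct

/-! ### Equivalence of crossed products -/

theorem IsLeibnizConformal.br_br_swap (hLeib : IsLeibnizConformal DR br) (l m : ℂ) (a b c : R) :
    br (l + m) (br l a b) c = -br (l + m) (br m b a) c := by
  have jacobi_ab := hLeib.jacobi l m a b c
  have jacobi_ba := hLeib.jacobi m l b a c
  rw [add_comm m l] at jacobi_ba
  linear_combination (norm := module) -jacobi_ab - jacobi_ba

theorem IsFC.br_Dm {F : FCData R DR} (hF : IsFC DR br F) (l m : ℂ) (a b : R) :
    br (l + m) (F.Dm l a) b = -br (l + m) (F.Tm m a) b := by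
  obtain ⟨-, fc2, fc3, -⟩ := hF
  linear_combination (norm := module) fc2 l m a b - fc3 l m a b

theorem IsFC.br_Q0 {F : FCData R DR} (hF : IsFC DR br F) (l m : ℂ) (a : R) :
    br (l + m) (F.Q0 l) a =
      F.Tm l (F.Tm m a) - F.Tm m (F.Tm l a) - ev2 F.P l (-l - m) • F.Tm (l + m) a := by
  obtain ⟨-, -, -, -, -, -, fc7, -⟩ := hF
  linear_combination (norm := module) fc7 l m a

section TrivialLeftCenter

variable (hcenter : ∀ a : R, (∀ (l : ℂ) (b : R), br l a b = 0) → a = 0)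
include hcenter

theorem eq_of_br_add_eq (hbr : IsConformalBilin DR DR DR br) {a a' : R} (l : ℂ)
    (h : ∀ m b, br (l + m) a b = br (l + m) a' b) : a = a' :=
  sub_eq_zero.1 <| hcenter _ fun n b => by
    rw [hbr.sub_left, ← add_sub_cancel l n, h, sub_self]

variable {F F' : FCData R DR} (hLeib : IsLeibnizConformal DR br) (hF : IsFC DR br F)
  (hF' : IsFC DR br F') {β : ℂ} {c : R} (hT : ∀ l a, F.Tm l a - β • F'.Tm l a = br l c a)
include hLeib hF hF' hT

theorem IsFC.Dm_eq_of_inner (l : ℂ) (a : R) : F.Dm l a = br l a c + β • F'.Dm l a :=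
  eq_of_br_add_eq hcenter hLeib.bilin l fun m b => by
    calc br (l + m) (F.Dm l a) b
        = -br (l + m) (br m c a + β • F'.Tm m a) b := by rw [hF.br_Dm, ← hT, sub_add_cancel]
      _ = br (l + m) (br l a c) b + β • br (l + m) (F'.Dm l a) b := by
        rw [hLeib.br_br_swap, hF'.br_Dm, hLeib.bilin.add_left, hLeib.bilin.smul_left]
        module
      _ = br (l + m) (br l a c + β • F'.Dm l a) b := by
        rw [hLeib.bilin.add_left, hLeib.bilin.smul_left]

theorem IsFC.Q0_eq_of_inner (hP : F.P = β • F'.P) (l : ℂ) :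
    F.Q0 l = br l c c + β • F'.Dm l c + β • F'.Tm l c + β ^ 2 • F'.Q0 l
      - aeval DR (sub2 F.P (C l) X) c := by
  have hbr := hLeib.bilin
  refine eq_of_br_add_eq hcenter hbr l fun m a => ?_
  have Tm_eq (l : ℂ) (a : R) : F.Tm l a = br l c a + β • F'.Tm l a := by
    rw [← hT, sub_add_cancel]
  have jacobi_cc := hLeib.jacobi l m c c a
  have fc2 := hF'.2.1 l m c a
  have fc3 := hF'.2.2.1 m l c a
  have br_Q0' := hF'.br_Q0 l m a
  rw [add_comm m l] at fc3
  simp only [hbr.sub_left, hbr.add_left, hbr.smul_left, hbr.aeval_left, hbr.add_right,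
    hbr.smul_right, neg_add', ← ev2_eq_eval_sub2, hF.br_Q0, Tm_eq, (F'.Tm_lin _).map_add,
    (F'.Tm_lin _).map_smul, hP, ev2_smul]
  linear_combination (norm := module) jacobi_cc - β • fc2 + β • fc3 - β ^ 2 • br_Q0'

end TrivialLeftCenter

namespace CrossedStruct

/-- The crossed product structure `Ω` is obtained from `Ω'` via the pair `(u, w)`. -/
abbrev EquivVia (Ω Ω' : CrossedStruct R Q DR DQ br bq) (u : Q →ₗ[ℂ] R) (w : Q ≃ₗ[ℂ] Q) : Prop :=
  DatumEquivVia DR DQ br Ω.lh (fun _ _ _ => 0) (fun _ _ _ => 0) Ω.rt Ω.fm bq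
    Ω'.lh (fun _ _ _ => 0) (fun _ _ _ => 0) Ω'.rt Ω'.fm bq u w

variable {Ω Ω' : CrossedStruct R Q DR DQ br bq} {u : Q →ₗ[ℂ] R} {w : Q ≃ₗ[ℂ] Q} {β : ℂ} {x : Q}
  {P : CPoly2}

theorem EquivVia.rt_sub_smul_eq (h : EquivVia Ω Ω' u w) (hwx : w x = β • x) (l : ℂ) (a : R) :
    Ω.rt l x a - β • Ω'.rt l x a = br l (u x) a := by
  obtain ⟨-, -, -, -, -, rt_eq, -, -⟩ := h
  rw [rt_eq, hwx, Ω'.datum.rt_bilin.smul_left, map_zero, sub_zero, add_sub_cancel_right]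

theorem EquivVia.map_bracket (h : EquivVia Ω Ω' u w) (l : ℂ) (y z : Q) :
    w (bq l y z) = bq l (w y) (w z) := by
  obtain ⟨-, -, -, -, -, -, bq_eq, -⟩ := h
  rw [bq_eq]
  simp

theorem EquivVia.exists_eq_smul (h : EquivVia Ω Ω' u w) (hx : IsFreeGenerator DQ x) :
    ∃ β : ℂ, β ≠ 0 ∧ ∀ y, w y = β • y :=
  hx.exists_eq_smul_of_commutes w h.2.1

theorem equivVia_lift (hbr : IsConformalBilin DR DR DR br) (hx : IsFreeGenerator DQ x)
    (hP : IsStructurePolynomial DQ bq x P) (hβ : β • P = P) (hw : ∀ y, w y = β • y) {c : R}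
    (hlh : ∀ l a, Ω.lh l a x = br l a c + β • Ω'.lh l a x)
    (hrt : ∀ l a, Ω.rt l x a = br l c a + β • Ω'.rt l x a)
    (hfm : ∀ l, Ω.fm l x x = br l c c + β • Ω'.lh l c x + β • Ω'.rt l x c + β ^ 2 • Ω'.fm l x x
      - aeval DR (sub2 P (C l) X) c) :
    EquivVia Ω Ω' (hx.lift DR c) w := by
  have hbq := Ω.datum.bq_bilin
  obtain ⟨hlh_bilin, -, -, hrt_bilin, hfm_bilin, -⟩ := Ω.datum
  obtain ⟨hlh'_bilin, -, -, hrt'_bilin, hfm'_bilin, -⟩ := Ω'.datum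
  have lift_aeval (p : ℂ[X]) (y : Q) :
      hx.lift DR c (aeval DQ p y) = aeval DR p (hx.lift DR c y) :=
    map_aeval_of_intertwines _ (hx.lift_map DR c) p y
  refine ⟨hx.lift_map DR c, by simp [hw], by simp, ?lh, by simp, ?rt, ?bq, ?fm⟩
  case lh =>
    intro l a y
    obtain ⟨p, rfl⟩ := hx.exists_aeval_eq y
    simp only [hw, hx.lift_aeval, hlh_bilin.aeval_right, hlh'_bilin.aeval_right,
      hlh'_bilin.smul_right, hbr.aeval_right, hlh, map_add, map_smul, map_zero, sub_zero]
  case rt =>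
    intro l y a
    obtain ⟨p, rfl⟩ := hx.exists_aeval_eq y
    simp only [hw, hx.lift_aeval, hrt_bilin.aeval_left, hrt'_bilin.aeval_left,
      hrt'_bilin.smul_left, hbr.aeval_left, hrt, map_zero]
    module
  case bq =>
    intro l y z
    simp only [map_zero, zero_add, LinearEquiv.eq_symm_apply, hw, hbq.smul_left, hbq.smul_right,
      hP.smul_bracket_eq hx hbq hβ]
  case fm =>
    intro l y z
    obtain ⟨p, rfl⟩ := hx.exists_aeval_eq y
    obtain ⟨q, rfl⟩ := hx.exists_aeval_eq z
    simp only [hw, hx.lift_aeval, lift_aeval, hP l, hbq.aeval_left, hbq.aeval_right, map_smul,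
      hbr.aeval_left, hbr.aeval_right, hlh'_bilin.aeval_left, hlh'_bilin.aeval_right,
      hlh'_bilin.smul_right, hrt'_bilin.aeval_left, hrt'_bilin.aeval_right, hrt'_bilin.smul_left,
      hfm_bilin.aeval_left, hfm_bilin.aeval_right, hfm'_bilin.aeval_left, hfm'_bilin.aeval_right,
      hfm'_bilin.smul_left, hfm'_bilin.smul_right, hfm, map_add, map_sub]
    module

section Classification

variable (hLeib : IsLeibnizConformal DR br)
  (hcenter : ∀ a : R, (∀ (l : ℂ) (b : R), br l a b = 0) → a = 0) (hx : IsFreeGenerator DQ x)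
include hLeib hcenter hx

theorem exists_equivVia_iff (hP : IsStructurePolynomial DQ bq x P) (hβ : β • P = P)
    (hw : ∀ y, w y = β • y) :
    (∃ u, EquivVia Ω Ω' u w) ↔ ∃ c, ∀ l a, Ω.rt l x a - β • Ω'.rt l x a = br l c a := by
  refine ⟨fun ⟨u, h⟩ => ⟨u x, h.rt_sub_smul_eq (hw x)⟩, fun ⟨c, hT⟩ => ⟨hx.lift DR c, ?_⟩⟩
  have hF := Ω.isFC_flag hLeib.bilin hx hP
  have hF' := Ω'.isFC_flag hLeib.bilin hx hP
  exact equivVia_lift hLeib.bilin hx hP hβ hw (hF.Dm_eq_of_inner hcenter hLeib hF' hT)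
    (fun l a => by rw [← hT, sub_add_cancel]) (hF.Q0_eq_of_inner hcenter hLeib hF' hT hβ.symm)

theorem crossedEquiv_iff_of_bracket_self_eq_zero (hbq : ∀ l, bq l x x = 0) :
    crossedEquiv DR DQ br bq Ω Ω' ↔
      ∃ β : ℂ, β ≠ 0 ∧ ∃ c, ∀ l a, Ω.rt l x a - β • Ω'.rt l x a = br l c a := by
  constructor
  · rintro ⟨u, w, h : EquivVia Ω Ω' u w⟩
    obtain ⟨β, hβ, hw⟩ := h.exists_eq_smul hx
    exact ⟨β, hβ, u x, h.rt_sub_smul_eq (hw x)⟩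
  · rintro ⟨β, hβ, hT⟩
    have hP : IsStructurePolynomial DQ bq x 0 := isStructurePolynomial_zero hbq
    obtain ⟨u, hu⟩ := (exists_equivVia_iff hLeib hcenter hx hP (smul_zero β)
      (w := LinearEquiv.smulOfNeZero ℂ Q β hβ) fun _ => rfl).2 hT
    exact ⟨u, _, hu⟩

theorem crossedCohom_iff (hP : IsStructurePolynomial DQ bq x P) :
    crossedCohom DR DQ br bq Ω Ω' ↔ ∃ c, ∀ l a, Ω.rt l x a - Ω'.rt l x a = br l c a := by
  have exists_iff := exists_equivVia_iff hLeib hcenter hx hP (one_smul ℂ P)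
    (w := LinearEquiv.refl ℂ Q) (Ω := Ω) (Ω' := Ω') fun y => (one_smul ℂ y).symm
  simp only [one_smul] at exists_iff
  exact exists_iff

end Classification

theorem crossedEquiv_iff_crossedCohom_of_virasoro (hx : IsFreeGenerator DQ x)
    (hbq : ∀ l, bq l x x = DQ x + (2 * l) • x) :
    crossedEquiv DR DQ br bq Ω Ω' ↔ crossedCohom DR DQ br bq Ω Ω' := by
  refine ⟨?_, fun ⟨u, h⟩ => ⟨u, _, h⟩⟩
  rintro ⟨u, w, h : EquivVia Ω Ω' u w⟩
  obtain ⟨β, hβ, hw⟩ := h.exists_eq_smul hx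
  have sq_smul : β • DQ x = (β * β) • DQ x := by
    simpa [hw, Ω.datum.bq_bilin.smul_left, Ω.datum.bq_bilin.smul_right, hbq, smul_smul]
      using h.map_bracket 0 x x
  have β_eq_one : β = 1 := by
    simpa [hβ] using smul_left_injective ℂ hx.map_ne_zero sq_smul
  have w_eq_refl : w = LinearEquiv.refl ℂ Q := by
    ext y
    simp [hw, β_eq_one]
  exact ⟨u, w_eq_refl ▸ h⟩

end CrossedStruct

theorem exists_bijective_quot_flag {x : Q} {P : CPoly2} (hLeib : IsLeibnizConformal DR br)
    (hx : IsFreeGenerator DQ x) (hbq : IsConformalBilin DQ DQ DQ bq)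
    (hP : IsStructurePolynomial DQ bq x P)
    {r : CrossedStruct R Q DR DQ br bq → CrossedStruct R Q DR DQ br bq → Prop}
    {s : {F : FCData R DR // IsFC DR br F ∧ F.P = P} →
      {F : FCData R DR // IsFC DR br F ∧ F.P = P} → Prop}
    (hrs : ∀ Ω Ω', r Ω Ω' ↔ s ⟨Ω.datum.flag x P, Ω.isFC_flag hLeib.bilin hx hP, rfl⟩
      ⟨Ω'.datum.flag x P, Ω'.isFC_flag hLeib.bilin hx hP, rfl⟩) :
    ∃ G : Quot r → Quot s, Function.Bijective G ∧
      ∀ (Ω : CrossedStruct R Q DR DQ br bq) (F : {F : FCData R DR // IsFC DR br F ∧ F.P = P}),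
        ((∀ (l : ℂ) (a : R), Ω.lh l a x = F.1.Dm l a) ∧
          (∀ (l : ℂ) (a : R), Ω.rt l x a = F.1.Tm l a) ∧
          (∀ l : ℂ, Ω.fm l x x = F.1.Q0 l)) →
        G (Quot.mk _ Ω) = Quot.mk _ F := by
  let flag (Ω : CrossedStruct R Q DR DQ br bq) : {F : FCData R DR // IsFC DR br F ∧ F.P = P} :=
    ⟨Ω.datum.flag x P, Ω.isFC_flag hLeib.bilin hx hP, rfl⟩
  have flag_bijective : Function.Bijective flag := by
    refine ⟨fun Ω Ω' h => CrossedStruct.flag_injective hx (congrArg Subtype.val h), ?_⟩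
    rintro ⟨F, hF, rfl⟩
    obtain ⟨Ω, hΩ⟩ := CrossedStruct.exists_flag_eq hLeib hx hbq hF hP
    exact ⟨Ω, Subtype.ext hΩ⟩
  let e := Quot.congr (Equiv.ofBijective flag flag_bijective) hrs
  refine ⟨e, e.bijective, fun Ω F ⟨hDm, hTm, hQ0⟩ => ?_⟩
  exact congrArg (Quot.mk s) (Subtype.ext (FCData.ext_of_forall hDm hTm hQ0 F.2.2.symm))

end CrossedProduct

theorem lhc_classification_abelian_and_virasoro_general
    {R Q : Type*} [AddCommGroup R] [Module ℂ R] [AddCommGroup Q] [Module ℂ Q]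
    (DR : Module.End ℂ R) (DQ : Module.End ℂ Q)
    (br : ℂ → R → R → R) (hLeib : IsLeibnizConformal DR br)
    (hcenter : ∀ a : R, (∀ (l : ℂ) (b : R), br l a b = 0) → a = 0)
    (x : Q) (hQfree : ∀ q : Q, ∃! p : Polynomial ℂ, Polynomial.aeval DQ p x = q)
    (bq : ℂ → Q → Q → Q) (hbq : IsLeibnizConformal DQ bq) :
    ((∀ (l : ℂ) (y z : Q), bq l y z = 0) →
      ∃ G : Quot (crossedEquiv DR DQ br bq) → Quot (fcRelAb DR br),
        Function.Bijective G ∧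
        ∀ (Ω : CrossedStruct R Q DR DQ br bq)
          (F : {F : FCData R DR // IsFC DR br F ∧ F.P = 0}),
          ((∀ (l : ℂ) (a : R), Ω.lh l a x = F.1.Dm l a) ∧
           (∀ (l : ℂ) (a : R), Ω.rt l x a = F.1.Tm l a) ∧
           (∀ l : ℂ, Ω.fm l x x = F.1.Q0 l)) →
          G (Quot.mk _ Ω) = Quot.mk _ F) ∧
    ((∀ l : ℂ, bq l x x = DQ x + (2 * l) • x) →
      (∃ G : Quot (crossedEquiv DR DQ br bq) → Quot (fcRelVir DR br),
        Function.Bijective G ∧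
        ∀ (Ω : CrossedStruct R Q DR DQ br bq)
          (F : {F : FCData R DR // IsFC DR br F ∧ F.P = virasoroP}),
          ((∀ (l : ℂ) (a : R), Ω.lh l a x = F.1.Dm l a) ∧
           (∀ (l : ℂ) (a : R), Ω.rt l x a = F.1.Tm l a) ∧
           (∀ l : ℂ, Ω.fm l x x = F.1.Q0 l)) →
          G (Quot.mk _ Ω) = Quot.mk _ F) ∧
      (∃ G : Quot (crossedCohom DR DQ br bq) → Quot (fcRelVir DR br),
        Function.Bijective G ∧
        ∀ (Ω : CrossedStruct R Q DR DQ br bq)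
          (F : {F : FCData R DR // IsFC DR br F ∧ F.P = virasoroP}),
          ((∀ (l : ℂ) (a : R), Ω.lh l a x = F.1.Dm l a) ∧
           (∀ (l : ℂ) (a : R), Ω.rt l x a = F.1.Tm l a) ∧
           (∀ l : ℂ, Ω.fm l x x = F.1.Q0 l)) →
          G (Quot.mk _ Ω) = Quot.mk _ F)) := by
  refine ⟨fun habelian => ?_, fun hvirasoro => ?_⟩
  · have bracket_self (l : ℂ) : bq l x x = 0 := habelian l x x
    have hP : IsStructurePolynomial DQ bq x 0 := isStructurePolynomial_zero bracket_self
    exact exists_bijective_quot_flag hLeib hQfree hbq.bilin hP fun _ _ =>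
      CrossedStruct.crossedEquiv_iff_of_bracket_self_eq_zero hLeib hcenter hQfree bracket_self
  · have hP := isStructurePolynomial_virasoroP hvirasoro
    refine ⟨exists_bijective_quot_flag hLeib hQfree hbq.bilin hP fun _ _ => ?_,
      exists_bijective_quot_flag hLeib hQfree hbq.bilin hP fun _ _ => ?_⟩
    · rw [CrossedStruct.crossedEquiv_iff_crossedCohom_of_virasoro hQfree hvirasoro]
      exact CrossedStruct.crossedCohom_iff hLeib hcenter hQfree hP
    · exact CrossedStruct.crossedCohom_iff hLeib hcenter hQfree hP

/-- Let `R = ℂ[∂]V` be a Lie conformal algebra with trivial left-center and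
`Q = ℂ[∂]x` a rank-one Leibniz conformal algebra.  (1) If `Q` is abelian then
`LHC²_R(Q,R) ≅ FC(R)/≡` with `(D,T,Q₀,0) ≡ (D',T',Q₀',0)` iff `T - βT' ∈ CInn(R)` for
some `β ≠ 0`.  (2) If `Q` is the Virasoro Lie conformal algebra then
`LHC²_R(Q,R) = LHC²(Q,R) ≅ FC(R)/≈` with `(D,T,Q₀,∂+2λ) ≈ (D',T',Q₀',∂+2λ)` iff
`T - T' ∈ CInn(R)`. -/
theorem lhc_classification_abelian_and_virasoro
    {R Q : Type*} [AddCommGroup R] [Module ℂ R] [AddCommGroup Q] [Module ℂ Q]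
    (DR : Module.End ℂ R) (DQ : Module.End ℂ Q)
    (br : ℂ → R → R → R) (hLeib : IsLeibnizConformal DR br)
    (hskew : IsSkewSymmBr DR br)
    (hcenter : ∀ a : R, (∀ (l : ℂ) (b : R), br l a b = 0) → a = 0)
    (ι : Type*) (v : ι → R)
    (hRfree : ∀ a : R, ∃! c : ι →₀ Polynomial ℂ,
      (c.sum fun i p => Polynomial.aeval DR p (v i)) = a)
    (x : Q) (hQfree : ∀ q : Q, ∃! p : Polynomial ℂ, Polynomial.aeval DQ p x = q)
    (bq : ℂ → Q → Q → Q) (hbq : IsLeibnizConformal DQ bq) :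
    -- (1) the abelian case
    ((∀ (l : ℂ) (y z : Q), bq l y z = 0) →
      ∃ G : Quot (crossedEquiv DR DQ br bq) → Quot (fcRelAb DR br),
        Function.Bijective G ∧
        ∀ (Ω : CrossedStruct R Q DR DQ br bq)
          (F : {F : FCData R DR // IsFC DR br F ∧ F.P = 0}),
          ((∀ (l : ℂ) (a : R), Ω.lh l a x = F.1.Dm l a) ∧
           (∀ (l : ℂ) (a : R), Ω.rt l x a = F.1.Tm l a) ∧
           (∀ l : ℂ, Ω.fm l x x = F.1.Q0 l)) →
          G (Quot.mk _ Ω) = Quot.mk _ F) ∧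
    -- (2) the Virasoro case
    ((∀ l : ℂ, bq l x x = DQ x + (2 * l) • x) →
      (∃ G : Quot (crossedEquiv DR DQ br bq) → Quot (fcRelVir DR br),
        Function.Bijective G ∧
        ∀ (Ω : CrossedStruct R Q DR DQ br bq)
          (F : {F : FCData R DR // IsFC DR br F ∧ F.P = virasoroP}),
          ((∀ (l : ℂ) (a : R), Ω.lh l a x = F.1.Dm l a) ∧
           (∀ (l : ℂ) (a : R), Ω.rt l x a = F.1.Tm l a) ∧
           (∀ l : ℂ, Ω.fm l x x = F.1.Q0 l)) →
          G (Quot.mk _ Ω) = Quot.mk _ F) ∧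
      (∃ G : Quot (crossedCohom DR DQ br bq) → Quot (fcRelVir DR br),
        Function.Bijective G ∧
        ∀ (Ω : CrossedStruct R Q DR DQ br bq)
          (F : {F : FCData R DR // IsFC DR br F ∧ F.P = virasoroP}),
          ((∀ (l : ℂ) (a : R), Ω.lh l a x = F.1.Dm l a) ∧
           (∀ (l : ℂ) (a : R), Ω.rt l x a = F.1.Tm l a) ∧
           (∀ l : ℂ, Ω.fm l x x = F.1.Q0 l)) →
          G (Quot.mk _ Ω) = Quot.mk _ F)) := by
  exact lhc_classification_abelian_and_virasoro_general DR DQ br hLeib hcenter x hQfree bq hbq
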